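/- Let S be a skew lattice and let x, y ∈ S with x D y. Then x∨y = y∧x and x∧y = y∨x. -/

import Mathlib

/-!
Put `m = y ∧ x`. In the band `(S, ∨)`, absorption makes `m` `R`-related to `x` and `L`-related to
`y`, so that `x = m ∨ (y ∨ x)` and `y = (y ∨ x) ∨ m`. Idempotence of `y ∨ x` then collapses the
product: `x ∨ y = m ∨ (y ∨ x) ∨ m = x ∨ m = m`. Exchanging `x` and `y` gives `y ∨ x = x ∧ y`.
-/

theorem mul_eq_of_isIdempotentElem_mul_swap {M : Type*} [Semigroup M] {x y m : M}
    (hyx : IsIdempotentElem (y * x)) (hmx : m * x = x) (hxm : x * m = m)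
    (hmy : m * y = m) (hym : y * m = y) : x * y = m := by
  have hx : m * (y * x) = x := by rw [← mul_assoc, hmy, hmx]
  have hy : y * x * m = y := by rw [mul_assoc, hxm, hym]
  calc
    x * y = m * (y * x) * (y * x * m) := by rw [hx, hy]
    _ = m * (y * x * (y * x)) * m := by simp only [mul_assoc]
    _ = m * (y * x) * m := by rw [hyx.eq]
    _ = m := by rw [hx, hxm]

section

variable {S : Type*} {wedge vee : S → S → S}

theorem vee_eq_wedge_of_wedge_wedge_eq
    (vee_idem : ∀ x : S, vee x x = x)
    (vee_assoc : ∀ x y z : S, vee (vee x y) z = vee x (vee y z))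
    (vee_wedge_self : ∀ x y : S, vee x (wedge x y) = x)
    (wedge_vee_self : ∀ x y : S, vee (wedge y x) x = x)
    {x y : S} (hx : wedge x (wedge y x) = x) (hy : wedge (wedge y x) y = y) :
    vee x y = wedge y x := by
  have hxm : vee x (wedge y x) = wedge y x := by
    simpa only [hx] using wedge_vee_self (wedge y x) x
  have hmy : vee (wedge y x) y = wedge y x := by
    simpa only [hy] using vee_wedge_self (wedge y x) y
  let : Semigroup S := { mul := vee, mul_assoc := vee_assoc }
  exact mul_eq_of_isIdempotentElem_mul_swap (vee_idem (vee y x))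
    (wedge_vee_self x y) hxm hmy (vee_wedge_self y x)

theorem dRel_vee_eq_wedge_swap_general
    (vee_idem : ∀ x : S, vee x x = x)
    (wedge_assoc : ∀ x y z : S, wedge (wedge x y) z = wedge x (wedge y z))
    (vee_assoc : ∀ x y z : S, vee (vee x y) z = vee x (vee y z))
    (vee_wedge_self : ∀ x y : S, vee x (wedge x y) = x)
    (wedge_vee_self : ∀ x y : S, vee (wedge y x) x = x)
    (x y : S)
    (hD : wedge (wedge x y) x = x ∧ wedge (wedge y x) y = y) :
    vee x y = wedge y x ∧ wedge x y = vee y x := by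
  obtain ⟨hx, hy⟩ := hD
  have vee_eq_wedge {a b : S} (ha : wedge (wedge a b) a = a) (hb : wedge (wedge b a) b = b) :
      vee a b = wedge b a :=
    vee_eq_wedge_of_wedge_wedge_eq vee_idem vee_assoc vee_wedge_self wedge_vee_self
      ((wedge_assoc a b a).symm.trans ha) hb
  exact ⟨vee_eq_wedge hx hy, (vee_eq_wedge hy hx).symm⟩

end

/-- If x D y in a skew lattice then x∨y = y∧x and x∧y = y∨x. -/
theorem dRel_vee_eq_wedge_swap {S : Type*} (wedge vee : S → S → S)
    (wedge_idem : ∀ x : S, wedge x x = x)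
    (vee_idem : ∀ x : S, vee x x = x)
    (wedge_assoc : ∀ x y z : S, wedge (wedge x y) z = wedge x (wedge y z))
    (vee_assoc : ∀ x y z : S, vee (vee x y) z = vee x (vee y z))
    (abs₁ : ∀ x y : S, wedge x (vee x y) = x)
    (abs₂ : ∀ x y : S, wedge (vee y x) x = x)
    (abs₃ : ∀ x y : S, vee x (wedge x y) = x)
    (abs₄ : ∀ x y : S, vee (wedge y x) x = x)
    (x y : S)
    (hD : wedge (wedge x y) x = x ∧ wedge (wedge y x) y = y) :
    vee x y = wedge y x ∧ wedge x y = vee y x :=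
  dRel_vee_eq_wedge_swap_general vee_idem wedge_assoc vee_assoc abs₃ abs₄ x y hD
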